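/- arXiv:1212.4462 — 9 statements merged into one kernel-verified Lean document; each statement's English description precedes it below -/
import Mathlib

section
/- Let ζ1 > ζ2 > ζ3 > ζ4 > ζ5 be real numbers and write ζpq = ζp − ζq. For 1 ≤ i < j < k < l ≤ 5 define cos φ_ijkl = √(ζil·ζjk/(ζik·ζjl)) and sin φ_ijkl = √(ζij·ζkl/(ζik·ζjl)) (positive square roots of the positive radicands). Then the following identity of 3×3 real matrices holds: [[1,0,0],[0,cos φ_1345, sin φ_1345],[0,−sin φ_1345, cos φ_1345]] · [[cos φ_1234, −sin φ_1234, 0],[sin φ_1234, cos φ_1234, 0],[0,0,1]] = [[cos φ_1235, −sin φ_1235, 0],[sin φ_1235, cos φ_1235, 0],[0,0,1]] · [[1,0,0],[0,cos φ_2345, sin φ_2345],[0,−sin φ_2345, cos φ_2345]] · [[cos φ_1245, 0, sin φ_1245],[0,1,0],[−sin φ_1245, 0, cos φ_1245]]. -/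
/-!
Write `a_pq = √(ζ_p - ζ_q)`. Each `cos φ_ijkl` and `sin φ_ijkl` is the ratio
`a_il a_jk / (a_ik a_jl)`, respectively `a_ij a_kl / (a_ik a_jl)` (`cosφ_eq_div`, `sinφ_eq_div`),
so both sides of the pentagon relation are matrices of rational functions in the `a_pq`.
In six of the nine entries the claimed equality is between two monomials and holds by cancellation
(in the entry `(0, 2)`, which vanishes on the left, the two monomials are on the right).
The entries `(0, 0)`, `(1, 0)` and `(1, 2)` involve three monomials; clearing denominators reduces
them to the Plücker relation `ζ_ik ζ_jl = ζ_ij ζ_kl + ζ_il ζ_jk` (`sqrt_pluecker`), for the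
quadruples of indices `0134`, `1234` and `0124` respectively.
-/

/- Kashaev's pentagon relation for orthogonal matrices in a direct sum of
one-dimensional spaces.  For real numbers ζ1 > ζ2 > ζ3 > ζ4 > ζ5 and
1 ≤ i < j < k < l ≤ 5 (here indexed 0,…,4), set
cos φ_ijkl = √(ζil ζjk/(ζik ζjl)), sin φ_ijkl = √(ζij ζkl/(ζik ζjl)). -/

noncomputable def cosφ (ζ : Fin 5 → ℝ) (i j k l : Fin 5) : ℝ :=
  Real.sqrt ((ζ i - ζ l) * (ζ j - ζ k) / ((ζ i - ζ k) * (ζ j - ζ l)))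

noncomputable def sinφ (ζ : Fin 5 → ℝ) (i j k l : Fin 5) : ℝ :=
  Real.sqrt ((ζ i - ζ j) * (ζ k - ζ l) / ((ζ i - ζ k) * (ζ j - ζ l)))

lemma cosφ_eq_div (ζ : Fin 5 → ℝ) (i j k l : Fin 5)
    (hij : ζ j < ζ i) (hjk : ζ k < ζ j) (hkl : ζ l < ζ k) :
    cosφ ζ i j k l = √(ζ i - ζ l) * √(ζ j - ζ k) / (√(ζ i - ζ k) * √(ζ j - ζ l)) := by
  rw [cosφ, Real.sqrt_div' _ (mul_nonneg (by linarith) (by linarith)),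
    Real.sqrt_mul (by linarith), Real.sqrt_mul (by linarith)]

lemma sinφ_eq_div (ζ : Fin 5 → ℝ) (i j k l : Fin 5)
    (hij : ζ j < ζ i) (hjk : ζ k < ζ j) (hkl : ζ l < ζ k) :
    sinφ ζ i j k l = √(ζ i - ζ j) * √(ζ k - ζ l) / (√(ζ i - ζ k) * √(ζ j - ζ l)) := by
  rw [sinφ, Real.sqrt_div' _ (mul_nonneg (by linarith) (by linarith)),
    Real.sqrt_mul (by linarith), Real.sqrt_mul (by linarith)]

/-- The Plücker relation `ζ_ik ζ_jl = ζ_ij ζ_kl + ζ_il ζ_jk` in terms of the square roots; after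
division by the left side it says `cos² φ_ijkl + sin² φ_ijkl = 1`. -/
lemma sqrt_pluecker {x y z w : ℝ} (hxy : y < x) (hyz : z < y) (hzw : w < z) :
    √(x - z) ^ 2 * √(y - w) ^ 2 =
      √(x - y) ^ 2 * √(z - w) ^ 2 + √(x - w) ^ 2 * √(y - z) ^ 2 := by
  rw [Real.sq_sqrt (by linarith), Real.sq_sqrt (by linarith), Real.sq_sqrt (by linarith),
    Real.sq_sqrt (by linarith), Real.sq_sqrt (by linarith), Real.sq_sqrt (by linarith)]
  ring

theorem pentagon_relation_one_dimensional (ζ : Fin 5 → ℝ)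
    (h1 : ζ 0 > ζ 1) (h2 : ζ 1 > ζ 2) (h3 : ζ 2 > ζ 3) (h4 : ζ 3 > ζ 4) :
    !![(1 : ℝ), 0, 0;
       0, cosφ ζ 0 2 3 4, sinφ ζ 0 2 3 4;
       0, -sinφ ζ 0 2 3 4, cosφ ζ 0 2 3 4] *
    !![cosφ ζ 0 1 2 3, -sinφ ζ 0 1 2 3, 0;
       sinφ ζ 0 1 2 3, cosφ ζ 0 1 2 3, 0;
       0, 0, 1] =
    !![cosφ ζ 0 1 2 4, -sinφ ζ 0 1 2 4, 0;
       sinφ ζ 0 1 2 4, cosφ ζ 0 1 2 4, 0;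
       0, 0, 1] *
    !![(1 : ℝ), 0, 0;
       0, cosφ ζ 1 2 3 4, sinφ ζ 1 2 3 4;
       0, -sinφ ζ 1 2 3 4, cosφ ζ 1 2 3 4] *
    !![cosφ ζ 0 1 3 4, 0, sinφ ζ 0 1 3 4;
       0, 1, 0;
       -sinφ ζ 0 1 3 4, 0, cosφ ζ 0 1 3 4] := by
  have h02 := h2.trans h1
  have h13 := h3.trans h2
  have h24 := h4.trans h3
  have p0134 := sqrt_pluecker h1 h13 h4
  have p1234 := sqrt_pluecker h2 h3 h4
  have p0124 := sqrt_pluecker h1 h2 h24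
  rw [cosφ_eq_div ζ 0 2 3 4 h02 h3 h4, sinφ_eq_div ζ 0 2 3 4 h02 h3 h4,
    cosφ_eq_div ζ 0 1 2 3 h1 h2 h3, sinφ_eq_div ζ 0 1 2 3 h1 h2 h3,
    cosφ_eq_div ζ 0 1 2 4 h1 h2 h24, sinφ_eq_div ζ 0 1 2 4 h1 h2 h24,
    cosφ_eq_div ζ 1 2 3 4 h2 h3 h4, sinφ_eq_div ζ 1 2 3 4 h2 h3 h4,
    cosφ_eq_div ζ 0 1 3 4 h1 h13 h4, sinφ_eq_div ζ 0 1 3 4 h1 h13 h4]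
  have a02 : 0 < √(ζ 0 - ζ 2) := Real.sqrt_pos.2 (by linarith)
  have a03 : 0 < √(ζ 0 - ζ 3) := Real.sqrt_pos.2 (by linarith)
  have a13 : 0 < √(ζ 1 - ζ 3) := Real.sqrt_pos.2 (by linarith)
  have a14 : 0 < √(ζ 1 - ζ 4) := Real.sqrt_pos.2 (by linarith)
  have a24 : 0 < √(ζ 2 - ζ 4) := Real.sqrt_pos.2 (by linarith)
  -- From here on only positivity and the three Plücker relations are used, so the square roots
  -- may be replaced by free variables.
  generalize √(ζ 0 - ζ 1) = x01, √(ζ 0 - ζ 2) = x02, √(ζ 0 - ζ 3) = x03, √(ζ 0 - ζ 4) = x04,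
    √(ζ 1 - ζ 2) = x12, √(ζ 1 - ζ 3) = x13, √(ζ 1 - ζ 4) = x14, √(ζ 2 - ζ 3) = x23,
    √(ζ 2 - ζ 4) = x24, √(ζ 3 - ζ 4) = x34 at *
  have e00 : x03 * x12 / (x02 * x13) =
      x04 * x12 / (x02 * x14) * (x04 * x13 / (x03 * x14)) +
        x01 * x24 / (x02 * x14) * (x12 * x34 / (x13 * x24)) * (x01 * x34 / (x03 * x14)) := by
    field_simp
    linear_combination x12 * p0134
  have e10 : x04 * x23 / (x03 * x24) * (x01 * x23 / (x02 * x13)) =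
      x01 * x24 / (x02 * x14) * (x04 * x13 / (x03 * x14)) -
        x04 * x12 / (x02 * x14) * (x12 * x34 / (x13 * x24)) * (x01 * x34 / (x03 * x14)) := by
    field_simp
    linear_combination -x01 * x04 * p1234
  have e12 : x02 * x34 / (x03 * x24) =
      x01 * x24 / (x02 * x14) * (x01 * x34 / (x03 * x14)) +
        x04 * x12 / (x02 * x14) * (x12 * x34 / (x13 * x24)) * (x04 * x13 / (x03 * x14)) := by
    field_simp
    linear_combination x34 * p0124
  ext i j
  fin_cases i <;> fin_cases j <;>
    simp only [Matrix.mul_apply, Fin.sum_univ_three] <;> simp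
  · linear_combination e00
  · field_simp
  · field_simp; ring
  · linear_combination e10
  · field_simp
  · linear_combination e12
  · field_simp
  · field_simp
  · field_simp
end

section
/- Let ζ1, ζ2, ζ3, ζ4 be complex n×n matrices such that every difference ζpq = ζp − ζq (p ≠ q) is invertible. Define the n×4n block matrices f124 = (1, ζ14ζ42⁻¹, 0, ζ12ζ24⁻¹), f234 = (0, 1, ζ24ζ43⁻¹, ζ23ζ34⁻¹), f123 = (1, ζ13ζ32⁻¹, ζ12ζ23⁻¹, 0), f134 = (1, 0, ζ14ζ43⁻¹, ζ13ζ34⁻¹). Then the 2n×2n block matrix P = [[1, ζ12ζ23⁻¹ζ34ζ42⁻¹],[1, −ζ14ζ42⁻¹]] is the unique 2n×2n matrix satisfying P · (f124 stacked over f234) = (f123 stacked over f134). -/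
/-!
Write `a = ζ₁ - ζ₂`, `b = ζ₂ - ζ₃`, `c = ζ₃ - ζ₄`, so that every difference of two of the `ζ`s is,
up to sign, a sum of consecutive letters among `a, b, c`. The product is computed block by block
(`blockMat2_mul_stack2`), and the equation becomes a handful of identities in a noncommutative ring
in which `b`, `c` and `b + c` are invertible. All but one are immediate from cancelling `b`, `c` and
`b + c` against their inverses; the remaining one, the vanishing of the last block in the first
row, rests on
`c (b + c)⁻¹ b = b (b + c)⁻¹ c`, both sides being the inverse of `b⁻¹ + c⁻¹`
(`parallel_sum_comm`).

Uniqueness holds because the first two block columns of the stacked matrix form a block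
unitriangular matrix `[[1, x], [0, 1]]`, so the stacked matrix can be cancelled on the right
(`eq_of_mul_stack2_eq`).
-/

open Matrix

/- ζ1, ζ2, ζ3, ζ4 are complex n×n matrices with all pairwise differences
invertible.  `blockRow b` assembles four n×n blocks into an n×4n matrix,
`stack2` stacks two n×4n matrices into a 2n×4n matrix, and `blockMat2 b`
assembles a 2×2 array of n×n blocks into a 2n×2n matrix. -/

def blockRow {n : ℕ} (b : Fin 4 → Matrix (Fin n) (Fin n) ℂ) :
    Matrix (Fin n) (Fin 4 × Fin n) ℂ :=
  Matrix.of fun r mc => b mc.1 r mc.2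

def stack2 {n : ℕ} (A B : Matrix (Fin n) (Fin 4 × Fin n) ℂ) :
    Matrix (Fin 2 × Fin n) (Fin 4 × Fin n) ℂ :=
  Matrix.of fun rp c => ![A, B] rp.1 rp.2 c

def blockMat2 {n : ℕ} (b : Fin 2 → Fin 2 → Matrix (Fin n) (Fin n) ℂ) :
    Matrix (Fin 2 × Fin n) (Fin 2 × Fin n) ℂ :=
  Matrix.of fun rp cq => b rp.1 cq.1 rp.2 cq.2


lemma blockMat2_mul_stack2 {n : ℕ} (M : Fin 2 → Fin 2 → Matrix (Fin n) (Fin n) ℂ)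
    (u v : Fin 4 → Matrix (Fin n) (Fin n) ℂ) :
    blockMat2 M * stack2 (blockRow u) (blockRow v) =
      stack2 (blockRow fun j => M 0 0 * u j + M 0 1 * v j)
        (blockRow fun j => M 1 0 * u j + M 1 1 * v j) := by
  ext ⟨r, p⟩ ⟨m, q⟩
  fin_cases r <;>
    simp [blockMat2, stack2, blockRow, Matrix.mul_apply, Fintype.sum_prod_type]

/-- Every matrix with rows and columns indexed by `Fin 2 × Fin n` is the block matrix of its
`n × n` blocks. -/
lemma exists_eq_blockMat2 {n : ℕ} (P : Matrix (Fin 2 × Fin n) (Fin 2 × Fin n) ℂ) :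
    ∃ M, P = blockMat2 M :=
  ⟨fun r c => Matrix.of fun p q => P (r, p) (c, q), rfl⟩

lemma stack2_blockRow_inj {n : ℕ} {u v u' v' : Fin 4 → Matrix (Fin n) (Fin n) ℂ}
    (h : stack2 (blockRow u) (blockRow v) = stack2 (blockRow u') (blockRow v')) :
    u = u' ∧ v = v' := by
  constructor
  · ext m p q
    exact congrFun (congrFun h (0, p)) (m, q)
  · ext m p q
    exact congrFun (congrFun h (1, p)) (m, q)

/-- A stack of two block rows whose first two block columns are `[[1, x], [0, 1]]` can be cancelled
on the right. -/
lemma eq_of_mul_stack2_eq {n : ℕ} {u v : Fin 4 → Matrix (Fin n) (Fin n) ℂ}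
    (hu : u 0 = 1) (hv0 : v 0 = 0) (hv1 : v 1 = 1)
    {P Q : Matrix (Fin 2 × Fin n) (Fin 2 × Fin n) ℂ}
    (h : P * stack2 (blockRow u) (blockRow v) = Q * stack2 (blockRow u) (blockRow v)) :
    P = Q := by
  obtain ⟨M, rfl⟩ := exists_eq_blockMat2 P
  obtain ⟨N, rfl⟩ := exists_eq_blockMat2 Q
  rw [blockMat2_mul_stack2, blockMat2_mul_stack2] at h
  obtain ⟨h0, h1⟩ := stack2_blockRow_inj h
  have e00 : M 0 0 = N 0 0 := by simpa [hu, hv0] using congrFun h0 0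
  have e10 : M 1 0 = N 1 0 := by simpa [hu, hv0] using congrFun h1 0
  have e01 : M 0 1 = N 0 1 := by simpa [hv1, e00] using congrFun h0 1
  have e11 : M 1 1 = N 1 1 := by simpa [hv1, e10] using congrFun h1 1
  congr 1
  ext r c : 2
  fin_cases r <;> fin_cases c <;> assumption

/-- Both sides equal `b - b (b + c)⁻¹ b`; here `S` is the inverse of `b + c`. -/
lemma parallel_sum_comm {R : Type*} [Ring R] {b c S : R}
    (h : (b + c) * S = 1) (h' : S * (b + c) = 1) : c * S * b = b * S * c := by
  have h1 : c * S = 1 - b * S := by rw [← h]; noncomm_ring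
  have h2 : S * c = 1 - S * b := by rw [← h']; noncomm_ring
  rw [h1, mul_assoc b S c, h2]
  noncomm_ring

lemma inv_sub_comm {n : ℕ} (x y : Matrix (Fin n) (Fin n) ℂ) (h : IsUnit (y - x)) :
    (x - y)⁻¹ = -(y - x)⁻¹ := by
  have hd := (Matrix.isUnit_iff_isUnit_det _).1 h
  refine Matrix.inv_eq_left_inv ?_
  rw [← neg_sub y x, neg_mul_neg, Matrix.nonsing_inv_mul _ hd]

theorem P_is_unique {n : ℕ} (ζ₁ ζ₂ ζ₃ ζ₄ : Matrix (Fin n) (Fin n) ℂ)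
    (h12 : IsUnit (ζ₁ - ζ₂)) (h13 : IsUnit (ζ₁ - ζ₃)) (h14 : IsUnit (ζ₁ - ζ₄))
    (h23 : IsUnit (ζ₂ - ζ₃)) (h24 : IsUnit (ζ₂ - ζ₄)) (h34 : IsUnit (ζ₃ - ζ₄)) :
    -- f124 = (1, ζ14ζ42⁻¹, 0, ζ12ζ24⁻¹), f234 = (0, 1, ζ24ζ43⁻¹, ζ23ζ34⁻¹),
    -- f123 = (1, ζ13ζ32⁻¹, ζ12ζ23⁻¹, 0), f134 = (1, 0, ζ14ζ43⁻¹, ζ13ζ34⁻¹)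
    let f124 := blockRow ![1, (ζ₁ - ζ₄) * (ζ₄ - ζ₂)⁻¹, 0, (ζ₁ - ζ₂) * (ζ₂ - ζ₄)⁻¹]
    let f234 := blockRow ![0, 1, (ζ₂ - ζ₄) * (ζ₄ - ζ₃)⁻¹, (ζ₂ - ζ₃) * (ζ₃ - ζ₄)⁻¹]
    let f123 := blockRow ![1, (ζ₁ - ζ₃) * (ζ₃ - ζ₂)⁻¹, (ζ₁ - ζ₂) * (ζ₂ - ζ₃)⁻¹, 0]
    let f134 := blockRow ![1, 0, (ζ₁ - ζ₄) * (ζ₄ - ζ₃)⁻¹, (ζ₁ - ζ₃) * (ζ₃ - ζ₄)⁻¹]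
    -- P = [[1, ζ12ζ23⁻¹ζ34ζ42⁻¹], [1, −ζ14ζ42⁻¹]]
    let P := blockMat2
      ![![1, (ζ₁ - ζ₂) * (ζ₂ - ζ₃)⁻¹ * (ζ₃ - ζ₄) * (ζ₄ - ζ₂)⁻¹],
        ![1, -((ζ₁ - ζ₄) * (ζ₄ - ζ₂)⁻¹)]]
    P * stack2 f124 f234 = stack2 f123 f134 ∧
      ∀ P' : Matrix (Fin 2 × Fin n) (Fin 2 × Fin n) ℂ,
        P' * stack2 f124 f234 = stack2 f123 f134 → P' = P := by
  intro f124 f234 f123 f134 P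
  have key : P * stack2 f124 f234 = stack2 f123 f134 := by
    have hb := (Matrix.isUnit_iff_isUnit_det _).1 h23
    have hc := (Matrix.isUnit_iff_isUnit_det _).1 h34
    have hs := (Matrix.isUnit_iff_isUnit_det _).1 h24
    simp only [P, f124, f234, f123, f134, blockMat2_mul_stack2, inv_sub_comm _ _ h23,
      inv_sub_comm _ _ h24, inv_sub_comm _ _ h34]
    have e13 : ζ₁ - ζ₃ = (ζ₁ - ζ₂) + (ζ₂ - ζ₃) := by abel
    have e14 : ζ₁ - ζ₄ = (ζ₁ - ζ₂) + (ζ₂ - ζ₄) := by abel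
    have e24 : (ζ₂ - ζ₃) + (ζ₃ - ζ₄) = ζ₂ - ζ₄ := by abel
    rw [e13, e14]
    have bB := Matrix.mul_nonsing_inv _ hb
    have Bb := Matrix.nonsing_inv_mul _ hb
    have cC := Matrix.mul_nonsing_inv _ hc
    have sS := Matrix.mul_nonsing_inv _ hs
    have Ss := Matrix.nonsing_inv_mul _ hs
    generalize (ζ₂ - ζ₃)⁻¹ = B at *
    generalize (ζ₃ - ζ₄)⁻¹ = C at *
    generalize (ζ₂ - ζ₄)⁻¹ = S at *
    generalize ζ₁ - ζ₂ = a at *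
    generalize ζ₂ - ζ₃ = b at *
    generalize ζ₃ - ζ₄ = c at *
    generalize ζ₂ - ζ₄ = s at *
    subst e24
    have hpar := parallel_sum_comm sS Ss
    -- `b⁻¹ c (b + c)⁻¹ = b⁻¹ - (b + c)⁻¹`
    have hBcS : B * c * S = B - S := by
      calc B * c * S = B * ((b + c) * S) - B * b * S := by noncomm_ring
        _ = B - S := by rw [sS, Bb, mul_one, one_mul]
    -- `(b + c)⁻¹ b c⁻¹ = c⁻¹ - (b + c)⁻¹`
    have hSbC : S * b * C = C - S := by
      calc S * b * C = S * (b + c) * C - S * (c * C) := by noncomm_ring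
        _ = C - S := by rw [Ss, cC, mul_one, one_mul]
    have hBcSbC : B * c * S * b * C = S := by
      calc B * c * S * b * C = B * (c * S * b) * C := by noncomm_ring
        _ = (B * b) * S * (c * C) := by rw [hpar]; noncomm_ring
        _ = S := by rw [Bb, cC, mul_one, one_mul]
    have row0_col1 : -((a + (b + c)) * S) + -(a * B * c * S) = -((a + b) * B) := by
      calc _ = -(a * S) - (b + c) * S - a * (B * c * S) := by noncomm_ring
        _ = -(a * B) - b * B := by rw [hBcS, sS, bB]; noncomm_ring
        _ = _ := by noncomm_ring
    have row0_col2 : a * B * c * S * ((b + c) * C) = a * B := by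
      calc _ = a * B * c * (S * (b + c)) * C := by simp only [mul_assoc]
        _ = a * B * (c * C) := by rw [Ss, mul_one, mul_assoc]
        _ = a * B := by rw [cC, mul_one]
    have row0_col3 : a * S + -(a * B * c * S * (b * C)) = 0 := by
      calc _ = a * S - a * (B * c * S * b * C) := by noncomm_ring
        _ = 0 := by rw [hBcSbC, sub_self]
    have row1_col2 : (a + (b + c)) * S * ((b + c) * C) = (a + (b + c)) * C := by
      calc _ = (a + (b + c)) * (S * (b + c)) * C := by simp only [mul_assoc]
        _ = _ := by rw [Ss, mul_one]
    have row1_col3 : a * S + (a + (b + c)) * S * (b * C) = (a + b) * C := by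
      calc _ = a * S + a * (S * b * C) + (b + c) * S * (b * C) := by noncomm_ring
        _ = _ := by rw [hSbC, sS]; noncomm_ring
    congr 2
    · funext j
      fin_cases j
      · simp
      · simpa using row0_col1
      · simpa using row0_col2
      · simpa using row0_col3
    · funext j
      fin_cases j
      · simp
      · simp
      · simpa using row1_col2
      · simpa using row1_col3
  refine ⟨key, fun P' hP' => ?_⟩
  exact eq_of_mul_stack2_eq rfl rfl rfl (hP'.trans key.symm)
end

section
/- Let ζ1, ζ2, ζ4 be symmetric complex n×n matrices with ζ12 = ζ1−ζ2, ζ14 = ζ1−ζ4, ζ24 = ζ2−ζ4, ζ41 = −ζ14, ζ42 = −ζ24 all invertible. Let f1, g1 be complex row vectors of length n and set f2 = f1ζ14ζ42⁻¹, f4 = f1ζ12ζ24⁻¹, g2 = g1ζ14ζ42⁻¹, g4 = g1ζ12ζ24⁻¹. Then the following three complex numbers are equal: f1ζ12g2ᵀ + g1ζ12f2ᵀ = f2ζ24g4ᵀ + g2ζ24f4ᵀ = f4ζ41g1ᵀ + g4ζ41f1ᵀ. -/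
/-! The defining relations say `f₄ ζ₂₄ = f₁ ζ₁₂` and `f₂ ζ₂₄ = f₁ ζ₄₁` (the latter because
`ζ₁₄ ζ₄₂⁻¹ = ζ₄₁ ζ₂₄⁻¹`), and likewise for `g`. As each difference `ζₚ - ζ_q` is symmetric, it defines
a symmetric bilinear form, so `f₂ ζ₂₄ g₄ᵀ` equals both `g₁ ζ₁₂ f₂ᵀ` and `g₄ ζ₄₁ f₁ᵀ`
(`dotProduct_mulVec_trade`). Exchanging `f` and `g` and adding gives the three equal expressions. -/

open Matrix

theorem dotProduct_mulVec_symm {n : ℕ} {M : Matrix (Fin n) (Fin n) ℂ} (hM : Mᵀ = M)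
    (u v : Fin n → ℂ) : u ⬝ᵥ (M *ᵥ v) = v ⬝ᵥ (M *ᵥ u) := by
  rw [dotProduct_mulVec, dotProduct_comm, ← mulVec_transpose, hM]

/-- If `v = w N C⁻¹`, i.e. `v C = w N`, with `N` symmetric, then `v` can be traded for `w`
in the bilinear form of `C`, at the price of replacing `C` by `N`. -/
theorem dotProduct_mulVec_trade {n : ℕ} {C N : Matrix (Fin n) (Fin n) ℂ}
    (hN : Nᵀ = N) (hu : IsUnit C) {v w : Fin n → ℂ} (hv : v = w ᵥ* (N * C⁻¹))
    (u : Fin n → ℂ) : v ⬝ᵥ (C *ᵥ u) = u ⬝ᵥ (N *ᵥ w) := by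
  rw [dotProduct_mulVec_symm hN, dotProduct_mulVec, dotProduct_mulVec, hv, vecMul_vecMul,
    Matrix.mul_assoc, Matrix.nonsing_inv_mul _ ((Matrix.isUnit_iff_isUnit_det _).1 hu),
    Matrix.mul_one]

/- ζ1, ζ2, ζ4 are symmetric complex n×n matrices whose pairwise differences
ζ12 = ζ1−ζ2, ζ14 = ζ1−ζ4, ζ24 = ζ2−ζ4, ζ41 = −ζ14, ζ42 = −ζ24 are all
invertible.  Row vectors are elements of `Fin n → ℂ`; `v ᵥ* M` is the
row-vector–matrix product and `u ⬝ᵥ (M *ᵥ v)` renders the scalar u·M·vᵀ.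
Theorem: the three forms of the scalar product on the space 124 agree. -/

theorem three_forms_of_scalar_product {n : ℕ}
    (ζ₁ ζ₂ ζ₄ : Matrix (Fin n) (Fin n) ℂ)
    (hs1 : ζ₁ᵀ = ζ₁) (hs2 : ζ₂ᵀ = ζ₂) (hs4 : ζ₄ᵀ = ζ₄)
    (h12 : IsUnit (ζ₁ - ζ₂)) (h14 : IsUnit (ζ₁ - ζ₄)) (h24 : IsUnit (ζ₂ - ζ₄))
    (h41 : IsUnit (ζ₄ - ζ₁)) (h42 : IsUnit (ζ₄ - ζ₂))
    (f₁ g₁ : Fin n → ℂ)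
    (f₂ f₄ g₂ g₄ : Fin n → ℂ)
    (hf2 : f₂ = f₁ ᵥ* ((ζ₁ - ζ₄) * (ζ₄ - ζ₂)⁻¹))
    (hf4 : f₄ = f₁ ᵥ* ((ζ₁ - ζ₂) * (ζ₂ - ζ₄)⁻¹))
    (hg2 : g₂ = g₁ ᵥ* ((ζ₁ - ζ₄) * (ζ₄ - ζ₂)⁻¹))
    (hg4 : g₄ = g₁ ᵥ* ((ζ₁ - ζ₂) * (ζ₂ - ζ₄)⁻¹)) :
    f₁ ⬝ᵥ ((ζ₁ - ζ₂) *ᵥ g₂) + g₁ ⬝ᵥ ((ζ₁ - ζ₂) *ᵥ f₂) =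
      f₂ ⬝ᵥ ((ζ₂ - ζ₄) *ᵥ g₄) + g₂ ⬝ᵥ ((ζ₂ - ζ₄) *ᵥ f₄) ∧
    f₂ ⬝ᵥ ((ζ₂ - ζ₄) *ᵥ g₄) + g₂ ⬝ᵥ ((ζ₂ - ζ₄) *ᵥ f₄) =
      f₄ ⬝ᵥ ((ζ₄ - ζ₁) *ᵥ g₁) + g₄ ⬝ᵥ ((ζ₄ - ζ₁) *ᵥ f₁) := by
  have s12 : (ζ₁ - ζ₂)ᵀ = ζ₁ - ζ₂ := by rw [transpose_sub, hs1, hs2]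
  have s24 : (ζ₂ - ζ₄)ᵀ = ζ₂ - ζ₄ := by rw [transpose_sub, hs2, hs4]
  have s41 : (ζ₄ - ζ₁)ᵀ = ζ₄ - ζ₁ := by rw [transpose_sub, hs4, hs1]
  have e : (ζ₁ - ζ₄) * (ζ₄ - ζ₂)⁻¹ = (ζ₄ - ζ₁) * (ζ₂ - ζ₄)⁻¹ := by
    have d24 := (Matrix.isUnit_iff_isUnit_det _).1 h24
    have hi : (ζ₄ - ζ₂)⁻¹ = -(ζ₂ - ζ₄)⁻¹ := by
      apply Matrix.inv_eq_right_inv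
      rw [← neg_sub ζ₂ ζ₄, neg_mul_neg, Matrix.mul_nonsing_inv _ d24]
    rw [hi, ← neg_sub ζ₄ ζ₁, neg_mul_neg]
  rw [e] at hf2 hg2
  constructor
  · rw [dotProduct_mulVec_symm s24 f₂, dotProduct_mulVec_symm s24 g₂,
      dotProduct_mulVec_trade s12 h24 hf4, dotProduct_mulVec_trade s12 h24 hg4,
      dotProduct_mulVec_symm s12 f₁, dotProduct_mulVec_symm s12 g₁, add_comm]
  · rw [dotProduct_mulVec_trade s41 h24 hf2, dotProduct_mulVec_trade s41 h24 hg2, add_comm]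
end

section
/- Let ζ1, ζ2, ζ4 be symmetric complex n×n matrices with all pairwise differences ζpq = ζp − ζq invertible, and let f124 = (1, ζ14ζ42⁻¹, 0, ζ12ζ24⁻¹) be the n×4n block matrix of the basis of the space 124. Then the Gramian of the rows of f124 with respect to the scalar product Gr(F,G) = F1ζ12G2ᵀ + F2ζ12G1ᵀ + F3ζ34G4ᵀ + F4ζ34G3ᵀ equals G124 = ζ12ζ42⁻¹ζ14 + ζ14ζ42⁻¹ζ12 = 2·ζ12ζ42⁻¹ζ14, and this matrix is symmetric and invertible. -/
/-!
Write `A = ζ₁ - ζ₄`, `C = ζ₄ - ζ₂`, so `ζ₁ - ζ₂ = A + C`. Then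
`(A + C) * C⁻¹ * A = A * C⁻¹ * A + A = A * C⁻¹ * (A + C)`, which is the equality of the two
products in the Gramian (`mul_inv_mul_swap`). Since `A` and `C` are symmetric, the same identity
says that the product is symmetric, and it is invertible as a product of invertible factors.

The matrix of scalar products of the rows of `F` with the rows of `G` (`rowGram`) has the summand
`F 1 * X * (G 0)ᵀ` with `X = ζ₁ - ζ₂` where `Gr` has its transpose `G 0 * X * (F 1)ᵀ`, and likewise
for the other pair of blocks. The two matrices agree at `F = G = f124`, again by the swap
identity (`rowGram_f124`).
-/

open Matrix

/- ζ1, ζ2, ζ3, ζ4 are symmetric complex n×n matrices with all pairwise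
differences invertible.  An n×4n block matrix is recorded by its four n×n
blocks; the Gram pairing with X = ζ12, Y = ζ34 is
Gr(F,G) = F1·X·G2ᵀ + G1·X·F2ᵀ + F3·Y·G4ᵀ + G3·Y·F4ᵀ.  The Gramian of the
rows of f124 = (1, ζ14ζ42⁻¹, 0, ζ12ζ24⁻¹) is G124 = Gr(f124, f124). -/

noncomputable def Gr {n : ℕ} (ζ₁ ζ₂ ζ₃ ζ₄ : Matrix (Fin n) (Fin n) ℂ)
    (F G : Fin 4 → Matrix (Fin n) (Fin n) ℂ) : Matrix (Fin n) (Fin n) ℂ :=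
  F 0 * (ζ₁ - ζ₂) * (G 1)ᵀ + G 0 * (ζ₁ - ζ₂) * (F 1)ᵀ +
    F 2 * (ζ₃ - ζ₄) * (G 3)ᵀ + G 2 * (ζ₃ - ζ₄) * (F 3)ᵀ

/-- Both sides equal `A * C⁻¹ * A + A` for `A = a - d`, `C = d - b`. -/
lemma mul_inv_mul_swap {n : ℕ} (a b d : Matrix (Fin n) (Fin n) ℂ) (h : IsUnit (d - b)) :
    (a - b) * (d - b)⁻¹ * (a - d) = (a - d) * (d - b)⁻¹ * (a - b) := by
  have hdet := (Matrix.isUnit_iff_isUnit_det _).1 h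
  have e : a - b = (a - d) + (d - b) := by abel
  rw [e, add_mul, add_mul, mul_add, Matrix.mul_nonsing_inv _ hdet,
    Matrix.nonsing_inv_mul_cancel_right _ _ hdet, one_mul]

/-- The matrix of the scalar products of the rows of `F` with the rows of `G`: its `(i, j)` entry
pairs row `i` of `F` with row `j` of `G`, for symmetric `ζ₁ - ζ₂` and `ζ₃ - ζ₄`. -/
noncomputable def rowGram {n : ℕ} (ζ₁ ζ₂ ζ₃ ζ₄ : Matrix (Fin n) (Fin n) ℂ)
    (F G : Fin 4 → Matrix (Fin n) (Fin n) ℂ) : Matrix (Fin n) (Fin n) ℂ :=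
  F 0 * (ζ₁ - ζ₂) * (G 1)ᵀ + F 1 * (ζ₁ - ζ₂) * (G 0)ᵀ +
    F 2 * (ζ₃ - ζ₄) * (G 3)ᵀ + F 3 * (ζ₃ - ζ₄) * (G 2)ᵀ

lemma transpose_f124_one {n : ℕ} {ζ₁ ζ₂ ζ₄ : Matrix (Fin n) (Fin n) ℂ}
    (hs1 : ζ₁ᵀ = ζ₁) (hs2 : ζ₂ᵀ = ζ₂) (hs4 : ζ₄ᵀ = ζ₄) :
    ((ζ₁ - ζ₄) * (ζ₄ - ζ₂)⁻¹)ᵀ = (ζ₄ - ζ₂)⁻¹ * (ζ₁ - ζ₄) := by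
  simp [Matrix.transpose_mul, Matrix.transpose_nonsing_inv, hs1, hs2, hs4]

/-- On `f124`, `Gr` is the matrix of scalar products of the rows. -/
lemma rowGram_f124 {n : ℕ} (ζ₁ ζ₂ ζ₃ ζ₄ : Matrix (Fin n) (Fin n) ℂ)
    (hs1 : ζ₁ᵀ = ζ₁) (hs2 : ζ₂ᵀ = ζ₂) (hs4 : ζ₄ᵀ = ζ₄) (h42 : IsUnit (ζ₄ - ζ₂)) :
    let f124 : Fin 4 → Matrix (Fin n) (Fin n) ℂ :=
      ![1, (ζ₁ - ζ₄) * (ζ₄ - ζ₂)⁻¹, 0, (ζ₁ - ζ₂) * (ζ₂ - ζ₄)⁻¹]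
    rowGram ζ₁ ζ₂ ζ₃ ζ₄ f124 f124 = Gr ζ₁ ζ₂ ζ₃ ζ₄ f124 f124 := by
  intro f124
  simp [rowGram, Gr, f124, -Matrix.transpose_mul, transpose_f124_one hs1 hs2 hs4, ← mul_assoc,
    mul_inv_mul_swap ζ₁ ζ₂ ζ₄ h42]

theorem gramian_of_f124 {n : ℕ} (ζ₁ ζ₂ ζ₃ ζ₄ : Matrix (Fin n) (Fin n) ℂ)
    (hs1 : ζ₁ᵀ = ζ₁) (hs2 : ζ₂ᵀ = ζ₂) (hs3 : ζ₃ᵀ = ζ₃) (hs4 : ζ₄ᵀ = ζ₄)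
    (h12 : IsUnit (ζ₁ - ζ₂)) (h13 : IsUnit (ζ₁ - ζ₃)) (h14 : IsUnit (ζ₁ - ζ₄))
    (h23 : IsUnit (ζ₂ - ζ₃)) (h24 : IsUnit (ζ₂ - ζ₄)) (h34 : IsUnit (ζ₃ - ζ₄)) :
    let f124 : Fin 4 → Matrix (Fin n) (Fin n) ℂ :=
      ![1, (ζ₁ - ζ₄) * (ζ₄ - ζ₂)⁻¹, 0, (ζ₁ - ζ₂) * (ζ₂ - ζ₄)⁻¹]
    Gr ζ₁ ζ₂ ζ₃ ζ₄ f124 f124 =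
        (ζ₁ - ζ₂) * (ζ₄ - ζ₂)⁻¹ * (ζ₁ - ζ₄) + (ζ₁ - ζ₄) * (ζ₄ - ζ₂)⁻¹ * (ζ₁ - ζ₂) ∧
      Gr ζ₁ ζ₂ ζ₃ ζ₄ f124 f124 = 2 • ((ζ₁ - ζ₂) * (ζ₄ - ζ₂)⁻¹ * (ζ₁ - ζ₄)) ∧
      (Gr ζ₁ ζ₂ ζ₃ ζ₄ f124 f124)ᵀ = Gr ζ₁ ζ₂ ζ₃ ζ₄ f124 f124 ∧
      IsUnit (Gr ζ₁ ζ₂ ζ₃ ζ₄ f124 f124) := by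
  intro f124
  have h42 : IsUnit (ζ₄ - ζ₂) := by simpa using h24.neg
  have hsw := mul_inv_mul_swap ζ₁ ζ₂ ζ₄ h42
  have hG : Gr ζ₁ ζ₂ ζ₃ ζ₄ f124 f124 = 2 • ((ζ₁ - ζ₂) * (ζ₄ - ζ₂)⁻¹ * (ζ₁ - ζ₄)) := by
    rw [two_nsmul]
    simp [Gr, f124, -Matrix.transpose_mul, transpose_f124_one hs1 hs2 hs4, ← mul_assoc]
  refine ⟨?_, hG, ?_, ?_⟩
  · rw [hG, ← hsw, two_nsmul]
  · rw [hG, Matrix.transpose_smul, mul_assoc, Matrix.transpose_mul, ← mul_assoc, hsw]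
    simp [Matrix.transpose_mul, Matrix.transpose_nonsing_inv, hs1, hs2, hs4]
  · have hinv : IsUnit (ζ₄ - ζ₂)⁻¹ := Matrix.isUnit_nonsing_inv_iff.2 h42
    have h2 : IsUnit (2 : Matrix (Fin n) (Fin n) ℂ) := by
      simpa only [map_ofNat] using (IsUnit.mk0 (2 : ℂ) two_ne_zero).map
        (algebraMap ℂ (Matrix (Fin n) (Fin n) ℂ))
    rw [hG, nsmul_eq_mul]
    exact_mod_cast h2.mul ((h12.mul hinv).mul h14)
end

section
/- Let ζ1, ζ2, ζ3, ζ4 be complex n×n matrices such that every difference ζpq = ζp − ζq (p ≠ q) and every transpose ζpqᵀ is invertible, and let X, Y be complex n×n matrices satisfying X + ζ24ζ43⁻¹·Y·ζ24⁻ᵀζ12ᵀ = 0 and X·ζ32⁻ᵀζ13ᵀ + ζ12ζ23⁻¹·Y·ζ34⁻ᵀζ13ᵀ = 0 (where M⁻ᵀ = (Mᵀ)⁻¹). Then X satisfies X = ζ12ζ23⁻¹ζ43ζ24⁻¹·X·ζ12⁻ᵀζ24ᵀζ34⁻ᵀζ32ᵀ. -/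
open Matrix

/-! The first condition determines `Y`, namely `-Y = ζ₄₃ ζ₂₄⁻¹ X ζ₁₂⁻ᵀ ζ₂₄ᵀ`, and the second one
expresses `X` through `Y`, namely `X = ζ₁₂ ζ₂₃⁻¹ (-Y) ζ₃₄⁻ᵀ ζ₃₂ᵀ`. Substituting the former into
the latter gives the equation for `X`. -/

/- ζ1, ζ2, ζ3, ζ4 are complex n×n matrices with all pairwise differences
ζpq = ζp − ζq (and hence their transposes) invertible; M⁻ᵀ = (Mᵀ)⁻¹.
The two hypotheses are the orthogonality conditions
X + ζ24ζ43⁻¹·Y·ζ24⁻ᵀζ12ᵀ = 0 and X·ζ32⁻ᵀζ13ᵀ + ζ12ζ23⁻¹·Y·ζ34⁻ᵀζ13ᵀ = 0;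
eliminating Y yields X = ζ12ζ23⁻¹ζ43ζ24⁻¹·X·ζ12⁻ᵀζ24ᵀζ34⁻ᵀζ32ᵀ. -/

theorem eliminate_Y {n : ℕ} (ζ₁ ζ₂ ζ₃ ζ₄ X Y : Matrix (Fin n) (Fin n) ℂ)
    (h12 : IsUnit (ζ₁ - ζ₂)) (h13 : IsUnit (ζ₁ - ζ₃)) (h14 : IsUnit (ζ₁ - ζ₄))
    (h23 : IsUnit (ζ₂ - ζ₃)) (h24 : IsUnit (ζ₂ - ζ₄)) (h34 : IsUnit (ζ₃ - ζ₄))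
    (h12t : IsUnit ((ζ₁ - ζ₂)ᵀ)) (h13t : IsUnit ((ζ₁ - ζ₃)ᵀ))
    (h14t : IsUnit ((ζ₁ - ζ₄)ᵀ)) (h23t : IsUnit ((ζ₂ - ζ₃)ᵀ))
    (h24t : IsUnit ((ζ₂ - ζ₄)ᵀ)) (h34t : IsUnit ((ζ₃ - ζ₄)ᵀ))
    (hEq1 : X + (ζ₂ - ζ₄) * (ζ₄ - ζ₃)⁻¹ * Y * ((ζ₂ - ζ₄)ᵀ)⁻¹ * (ζ₁ - ζ₂)ᵀ = 0)
    (hEq2 : X * ((ζ₃ - ζ₂)ᵀ)⁻¹ * (ζ₁ - ζ₃)ᵀ +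
      (ζ₁ - ζ₂) * (ζ₂ - ζ₃)⁻¹ * Y * ((ζ₃ - ζ₄)ᵀ)⁻¹ * (ζ₁ - ζ₃)ᵀ = 0) :
    X = (ζ₁ - ζ₂) * (ζ₂ - ζ₃)⁻¹ * (ζ₄ - ζ₃) * (ζ₂ - ζ₄)⁻¹ * X *
      ((ζ₁ - ζ₂)ᵀ)⁻¹ * (ζ₂ - ζ₄)ᵀ * ((ζ₃ - ζ₄)ᵀ)⁻¹ * (ζ₃ - ζ₂)ᵀ := by
  have h43 : IsUnit (ζ₄ - ζ₃) := by simpa using h34.neg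
  have h32t : IsUnit ((ζ₃ - ζ₂)ᵀ) := by
    rw [← neg_sub, transpose_neg]
    exact h23t.neg
  rw [isUnit_iff_isUnit_det] at h43 h24 h13t h12t h24t h32t
  -- The first condition, solved for `Y`.
  have hY : (ζ₄ - ζ₃) * (ζ₂ - ζ₄)⁻¹ * X * ((ζ₁ - ζ₂)ᵀ)⁻¹ * (ζ₂ - ζ₄)ᵀ = -Y := by
    rw [eq_neg_of_add_eq_zero_left hEq1]
    simp only [Matrix.mul_neg, Matrix.neg_mul, Matrix.mul_assoc,
      nonsing_inv_mul_cancel_left _ _ h24, mul_nonsing_inv_cancel_left _ _ h43,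
      mul_nonsing_inv_cancel_left _ _ h12t, nonsing_inv_mul _ h24t, Matrix.mul_one]
  -- The second condition, solved for `X`: cancel the common right factor `ζ₁₃ᵀ`, then `ζ₃₂⁻ᵀ`.
  have hX : X = -((ζ₁ - ζ₂) * (ζ₂ - ζ₃)⁻¹ * Y * ((ζ₃ - ζ₄)ᵀ)⁻¹ * (ζ₃ - ζ₂)ᵀ) := by
    have h := congrArg (fun M => M * ((ζ₁ - ζ₃)ᵀ)⁻¹ * (ζ₃ - ζ₂)ᵀ) hEq2
    simp only [Matrix.add_mul, Matrix.zero_mul, mul_nonsing_inv_cancel_right _ _ h13t,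
      nonsing_inv_mul_cancel_right _ _ h32t] at h
    exact eq_neg_of_add_eq_zero_left h
  calc X = (ζ₁ - ζ₂) * (ζ₂ - ζ₃)⁻¹ * (-Y) * ((ζ₃ - ζ₄)ᵀ)⁻¹ * (ζ₃ - ζ₂)ᵀ := by
        simpa only [Matrix.mul_neg, Matrix.neg_mul] using hX
    _ = _ := by rw [← hY]; simp only [Matrix.mul_assoc]
end

section
/- Let ζ1, …, ζ5 be symmetric complex n×n matrices such that every difference ζpq = ζp − ζq (p ≠ q) is invertible. For 1 ≤ i < j < k ≤ 5 let f_ijk be the n×5n block matrix with identity in block position i, ζik·ζkj⁻¹ in position j, ζij·ζjk⁻¹ in position k, zero elsewhere; let G_ijk = 2·ζij·ζkj⁻¹·ζik, and let c_ijk be any invertible complex n×n matrix with c_ijk·c_ijkᵀ = G_ijk; set e_ijk = c_ijk⁻¹·f_ijk. Then there exist unique 3n×3n matrices P′, Q′, R′, S′, T′ satisfying P′·(e124;e234;e145) = (e123;e134;e145), Q′·(e123;e134;e145) = (e123;e135;e345), R′·(e124;e234;e145) = (e125;e234;e245), S′·(e125;e234;e245) = (e125;e235;e345), T′·(e125;e235;e345)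 = (e123;e135;e345), they have the block patterns [[*,*,0],[*,*,0],[0,0,1]], [[1,0,0],[0,*,*],[0,*,*]], [[*,0,*],[0,1,0],[*,0,*]], [[1,0,0],[0,*,*],[0,*,*]], [[*,*,0],[*,*,0],[0,0,1]] respectively, each of them is complex orthogonal (MᵀM = 1), and they satisfy the pentagon relation Q′P′ = T′S′R′. -/
/-!
Each triangle `(i, j, k)` contributes the Gram matrix `eᵢⱼₖᵀ eᵢⱼₖ = fᵢⱼₖᵀ Gᵢⱼₖ⁻¹ fᵢⱼₖ`, which splits
as a sum over the oriented edges of the triangle, `½ (Dᵢⱼ + Dⱼₖ - Dᵢₖ)`, where `D_pq` (`edgeMat`)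
depends only on the edge `pq` (`gram_triangle`).  Summed over a triangulation of the pentagon the
diagonals cancel, so the five stacked matrices `E` all have the same `Eᵀ E`, namely half the sum
over the boundary edges.

One of the five stacks has a right inverse (`stack_rightInv`).  Equality of the Gram matrices then
does everything else.  If `Eᵀ E = E'ᵀ E'` and `E X = 1`, then `E = (E' X)ᵀ E'`, from which `E'` is
right invertible too (`rightInv_transfer`); exchanging the roles of `E` and `E'` gives `M` with
`M E = E'` (`exists_flip`).  Such an `M` is unique because `E` cancels on the right, and orthogonal
because `Eᵀ (Mᵀ M) E = Eᵀ E`.  A triangle common to both triangulations gives a block row of the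
identity in `M`, and by orthogonality the corresponding block column too.  The pentagon relation
follows by applying both sides to the first stack.
-/


open Matrix

/- ζ1, …, ζ5 (indexed 0,…,4) are symmetric complex n×n matrices with all
pairwise differences invertible.  `fMat ζ i j k` is the n×5n block matrix with
identity in block position i, ζik·ζkj⁻¹ in position j, ζij·ζjk⁻¹ in position k,
zero elsewhere; G_ijk = 2ζij·ζkj⁻¹·ζik; the c_ijk are invertible matrices with
c_ijk·c_ijkᵀ = G_ijk, and e_ijk = c_ijk⁻¹·f_ijk.  `stack3` stacks three n×5n
matrices; `blk M a b` is the (a,b) n×n block of a 3n×3n matrix M. -/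

noncomputable def fMat {n : ℕ} (ζ : Fin 5 → Matrix (Fin n) (Fin n) ℂ)
    (i j k : Fin 5) : Matrix (Fin n) (Fin 5 × Fin n) ℂ :=
  Matrix.of fun r mc =>
    (if mc.1 = i then (1 : Matrix (Fin n) (Fin n) ℂ)
     else if mc.1 = j then (ζ i - ζ k) * (ζ k - ζ j)⁻¹
     else if mc.1 = k then (ζ i - ζ j) * (ζ j - ζ k)⁻¹
     else 0) r mc.2

noncomputable def Gmat {n : ℕ} (ζ : Fin 5 → Matrix (Fin n) (Fin n) ℂ)
    (i j k : Fin 5) : Matrix (Fin n) (Fin n) ℂ :=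
  2 • ((ζ i - ζ j) * (ζ k - ζ j)⁻¹ * (ζ i - ζ k))

def stack3 {n : ℕ} (A B C : Matrix (Fin n) (Fin 5 × Fin n) ℂ) :
    Matrix (Fin 3 × Fin n) (Fin 5 × Fin n) ℂ :=
  Matrix.of fun rp c => ![A, B, C] rp.1 rp.2 c

def blk {n : ℕ} (M : Matrix (Fin 3 × Fin n) (Fin 3 × Fin n) ℂ) (a b : Fin 3) :
    Matrix (Fin n) (Fin n) ℂ :=
  Matrix.of fun r c => M (a, r) (b, c)

/-- Block pattern [[*,*,0],[*,*,0],[0,0,1]]. -/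
def PatP {n : ℕ} (M : Matrix (Fin 3 × Fin n) (Fin 3 × Fin n) ℂ) : Prop :=
  blk M 0 2 = 0 ∧ blk M 1 2 = 0 ∧ blk M 2 0 = 0 ∧ blk M 2 1 = 0 ∧ blk M 2 2 = 1

/-- Block pattern [[1,0,0],[0,*,*],[0,*,*]]. -/
def PatQ {n : ℕ} (M : Matrix (Fin 3 × Fin n) (Fin 3 × Fin n) ℂ) : Prop :=
  blk M 0 0 = 1 ∧ blk M 0 1 = 0 ∧ blk M 0 2 = 0 ∧ blk M 1 0 = 0 ∧ blk M 2 0 = 0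

/-- Block pattern [[*,0,*],[0,1,0],[*,0,*]]. -/
def PatR {n : ℕ} (M : Matrix (Fin 3 × Fin n) (Fin 3 × Fin n) ℂ) : Prop :=
  blk M 0 1 = 0 ∧ blk M 1 0 = 0 ∧ blk M 1 1 = 1 ∧ blk M 1 2 = 0 ∧ blk M 2 1 = 0

/-- The five flip equations on orthonormal bases e_ijk = c_ijk⁻¹ f_ijk
(vertices 1,…,5 indexed 0,…,4):  P′(e124;e234;e145) = (e123;e134;e145),
Q′(e123;e134;e145) = (e123;e135;e345), R′(e124;e234;e145) = (e125;e234;e245),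
S′(e125;e234;e245) = (e125;e235;e345), T′(e125;e235;e345) = (e123;e135;e345). -/
noncomputable def FlipEqns {n : ℕ} (ζ : Fin 5 → Matrix (Fin n) (Fin n) ℂ)
    (c : Fin 5 → Fin 5 → Fin 5 → Matrix (Fin n) (Fin n) ℂ)
    (P Q R S T : Matrix (Fin 3 × Fin n) (Fin 3 × Fin n) ℂ) : Prop :=
  let e := fun i j k => (c i j k)⁻¹ * fMat ζ i j k
  P * stack3 (e 0 1 3) (e 1 2 3) (e 0 3 4) =
    stack3 (e 0 1 2) (e 0 2 3) (e 0 3 4) ∧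
  Q * stack3 (e 0 1 2) (e 0 2 3) (e 0 3 4) =
    stack3 (e 0 1 2) (e 0 2 4) (e 2 3 4) ∧
  R * stack3 (e 0 1 3) (e 1 2 3) (e 0 3 4) =
    stack3 (e 0 1 4) (e 1 2 3) (e 1 3 4) ∧
  S * stack3 (e 0 1 4) (e 1 2 3) (e 1 3 4) =
    stack3 (e 0 1 4) (e 1 2 4) (e 2 3 4) ∧
  T * stack3 (e 0 1 4) (e 1 2 4) (e 2 3 4) =
    stack3 (e 0 1 2) (e 0 2 4) (e 2 3 4)

/-! ### Stacks with equal Gram matrices -/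

section Gram

variable {ι κ : Type*} [Fintype ι] [DecidableEq ι] [Fintype κ]

lemma cancel_right {μ : Type*} {E : Matrix ι κ ℂ} {X : Matrix κ ι ℂ} (hX : E * X = 1)
    {M N : Matrix μ ι ℂ} (h : M * E = N * E) : M = N := by
  have := congrArg (· * X) h
  simpa [Matrix.mul_assoc, hX] using this

/-- `(E' X)ᵀ` carries `E'` to `E`, and it is a square left inverse of `E' X`. -/
lemma rightInv_transfer {E E' : Matrix ι κ ℂ} (hG : E'ᵀ * E' = Eᵀ * E)
    (hE : ∃ X : Matrix κ ι ℂ, E * X = 1) : ∃ X : Matrix κ ι ℂ, E' * X = 1 := by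
  obtain ⟨X, hX⟩ := hE
  have h1 : (Xᵀ * E'ᵀ) * E' = E := by
    rw [Matrix.mul_assoc, hG, ← Matrix.mul_assoc, ← Matrix.transpose_mul, hX,
      Matrix.transpose_one, Matrix.one_mul]
  have h2 : (Xᵀ * E'ᵀ) * (E' * X) = 1 := by
    rw [← Matrix.mul_assoc, h1, hX]
  refine ⟨X * (Xᵀ * E'ᵀ), ?_⟩
  rw [← Matrix.mul_assoc]
  exact _root_.mul_eq_one_comm.mp h2

lemma exists_flip {E E' : Matrix ι κ ℂ} (hG : E'ᵀ * E' = Eᵀ * E)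
    (hE' : ∃ X : Matrix κ ι ℂ, E' * X = 1) : ∃ M : Matrix ι ι ℂ, M * E = E' := by
  obtain ⟨X, hX⟩ := hE'
  refine ⟨Xᵀ * Eᵀ, ?_⟩
  rw [Matrix.mul_assoc, ← hG, ← Matrix.mul_assoc, ← Matrix.transpose_mul, hX,
    Matrix.transpose_one, Matrix.one_mul]

lemma flip_orthogonal {E E' : Matrix ι κ ℂ} (hG : E'ᵀ * E' = Eᵀ * E)
    (hE : ∃ X : Matrix κ ι ℂ, E * X = 1) {M : Matrix ι ι ℂ} (hM : M * E = E') :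
    Mᵀ * M = 1 := by
  obtain ⟨X, hX⟩ := hE
  have h1 : Eᵀ * (Mᵀ * M * E) = Eᵀ * E := by
    rw [← hG, ← hM, Matrix.transpose_mul]
    simp only [Matrix.mul_assoc]
  have h2 : Mᵀ * M * E = E := by
    have hXE : Xᵀ * Eᵀ = 1 := by rw [← Matrix.transpose_mul, hX, Matrix.transpose_one]
    have := congrArg (Xᵀ * ·) h1
    simpa only [← Matrix.mul_assoc Xᵀ, hXE, Matrix.one_mul] using this
  exact cancel_right hX (by rw [h2, Matrix.one_mul])

/-- A row shared by `E` and `E'` yields the corresponding row and column of the identity in the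
transition matrix. -/
lemma flip_fixed {E E' : Matrix ι κ ℂ} (hG : E'ᵀ * E' = Eᵀ * E)
    (hE : ∃ X : Matrix κ ι ℂ, E * X = 1) {M : Matrix ι ι ℂ} (hM : M * E = E')
    {b : ι} (hb : ∀ c, E b c = E' b c) (x : ι) :
    M b x = (1 : Matrix ι ι ℂ) b x ∧ M x b = (1 : Matrix ι ι ℂ) x b := by
  have horth := _root_.mul_eq_one_comm.mp (flip_orthogonal hG hE hM)
  obtain ⟨X, hX⟩ := hE
  have hMX : M = E' * X := by rw [← hM, Matrix.mul_assoc, hX, Matrix.mul_one]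
  have hrow : ∀ y, M b y = (1 : Matrix ι ι ℂ) b y := by
    intro y
    rw [hMX, ← hX, Matrix.mul_apply, Matrix.mul_apply]
    exact Finset.sum_congr rfl fun c _ => by rw [hb c]
  refine ⟨hrow x, ?_⟩
  rw [← horth, Matrix.mul_apply]
  simp [hrow, Matrix.one_apply]

end Gram

/-! ### The Gram matrix of a triangle -/

/-- The contribution of the edge `pq`: `(ζ p - ζ q)⁻¹` in the block positions `(p, q)` and `(q, p)`,
its negative in `(p, p)` and `(q, q)`, zero elsewhere. -/
noncomputable def edgeMat {n : ℕ} (ζ : Fin 5 → Matrix (Fin n) (Fin n) ℂ) (p q : Fin 5) :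
    Matrix (Fin 5 × Fin n) (Fin 5 × Fin n) ℂ :=
  Matrix.of fun a b =>
    (if a.1 = p then
      (if b.1 = p then -(ζ p - ζ q)⁻¹ else if b.1 = q then (ζ p - ζ q)⁻¹ else 0)
     else if a.1 = q then
      (if b.1 = p then (ζ p - ζ q)⁻¹ else if b.1 = q then -(ζ p - ζ q)⁻¹ else 0)
     else 0) a.2 b.2

/-- The `m`-th `n × n` block of `fMat ζ i j k`. -/
noncomputable def fBlk {n : ℕ} (ζ : Fin 5 → Matrix (Fin n) (Fin n) ℂ) (i j k m : Fin 5) :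
    Matrix (Fin n) (Fin n) ℂ :=
  if m = i then 1
  else if m = j then (ζ i - ζ k) * (ζ k - ζ j)⁻¹
  else if m = k then (ζ i - ζ j) * (ζ j - ζ k)⁻¹
  else 0

lemma neg_inv_mat {n : ℕ} (A : Matrix (Fin n) (Fin n) ℂ) (hA : IsUnit A) : (-A)⁻¹ = -A⁻¹ := by
  apply Matrix.inv_eq_right_inv
  rw [neg_mul_neg]
  exact Matrix.mul_nonsing_inv A ((Matrix.isUnit_iff_isUnit_det A).mp hA)

lemma fMat_gram_apply {n : ℕ} (ζ : Fin 5 → Matrix (Fin n) (Fin n) ℂ) (i j k : Fin 5)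
    (W : Matrix (Fin n) (Fin n) ℂ) (a b : Fin 5 × Fin n) :
    ((fMat ζ i j k)ᵀ * (W * fMat ζ i j k)) a b
      = ((fBlk ζ i j k a.1)ᵀ * (W * fBlk ζ i j k b.1)) a.2 b.2 := by
  rfl

/-- The Gram matrix of a triangle is a signed sum of contributions of its edges. With `x = ζᵢⱼ`,
`y = ζₖⱼ`, `z = ζᵢₖ = x - y`, every block reduces to `z⁻¹ y x⁻¹ = z⁻¹ - x⁻¹ = x⁻¹ y z⁻¹` or one of
its analogues. -/
lemma gram_triangle {n : ℕ} (ζ : Fin 5 → Matrix (Fin n) (Fin n) ℂ)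
    (hsym : ∀ p : Fin 5, (ζ p)ᵀ = ζ p)
    (hinv : ∀ p q : Fin 5, p ≠ q → IsUnit (ζ p - ζ q))
    (i j k : Fin 5) (hij : i < j) (hjk : j < k) (c : Matrix (Fin n) (Fin n) ℂ)
    (hc : c * cᵀ = Gmat ζ i j k) :
    (c⁻¹ * fMat ζ i j k)ᵀ * (c⁻¹ * fMat ζ i j k)
      = (1 / 2 : ℂ) • (edgeMat ζ i j + edgeMat ζ j k - edgeMat ζ i k) := by
  have hik := hij.trans hjk
  obtain ⟨x, hx⟩ : ∃ x, x = ζ i - ζ j := ⟨_, rfl⟩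
  obtain ⟨y, hy⟩ : ∃ y, y = ζ k - ζ j := ⟨_, rfl⟩
  obtain ⟨z, hz⟩ : ∃ z, z = ζ i - ζ k := ⟨_, rfl⟩
  have hxu : IsUnit x := hx ▸ hinv i j hij.ne
  have hyu : IsUnit y := hy ▸ hinv k j hjk.ne'
  have hzu : IsUnit z := hz ▸ hinv i k hik.ne
  have hjk' : ζ j - ζ k = -y := by rw [hy]; abel
  have hxzy : x = z + y := by rw [hx, hy, hz]; abel
  have hxT : xᵀ = x := by rw [hx, Matrix.transpose_sub, hsym, hsym]
  have hyT : yᵀ = y := by rw [hy, Matrix.transpose_sub, hsym, hsym]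
  have hzT : zᵀ = z := by rw [hz, Matrix.transpose_sub, hsym, hsym]
  have hyiT : (y⁻¹)ᵀ = y⁻¹ := by rw [Matrix.transpose_nonsing_inv, hyT]
  have hxd := (Matrix.isUnit_iff_isUnit_det x).mp hxu
  have hyd := (Matrix.isUnit_iff_isUnit_det y).mp hyu
  have hzd := (Matrix.isUnit_iff_isUnit_det z).mp hzu
  have xx := Matrix.mul_nonsing_inv x hxd
  have xx' := Matrix.nonsing_inv_mul x hxd
  have yy := Matrix.mul_nonsing_inv y hyd
  have yy' := Matrix.nonsing_inv_mul y hyd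
  have zz := Matrix.mul_nonsing_inv z hzd
  have zz' := Matrix.nonsing_inv_mul z hzd
  have xxA : ∀ A, x * (x⁻¹ * A) = A := fun A => by rw [← Matrix.mul_assoc, xx, Matrix.one_mul]
  have yyA' : ∀ A, y⁻¹ * (y * A) = A := fun A => by rw [← Matrix.mul_assoc, yy', Matrix.one_mul]
  have zzA : ∀ A, z * (z⁻¹ * A) = A := fun A => by rw [← Matrix.mul_assoc, zz, Matrix.one_mul]
  have hyzx : y = x - z := by rw [hxzy]; abel
  have hzxy : z = x - y := by rw [hxzy]; abel
  have W1 : z⁻¹ * (y * x⁻¹) = z⁻¹ - x⁻¹ := by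
    rw [hyzx, Matrix.sub_mul, Matrix.mul_sub, xx, Matrix.mul_one, ← Matrix.mul_assoc, zz',
      Matrix.one_mul]
  have W2 : x⁻¹ * (y * z⁻¹) = z⁻¹ - x⁻¹ := by
    rw [hyzx, Matrix.sub_mul, Matrix.mul_sub, zz, Matrix.mul_one, ← Matrix.mul_assoc, xx',
      Matrix.one_mul]
  have W3 : y⁻¹ * (z * x⁻¹) = y⁻¹ - x⁻¹ := by
    rw [hzxy, Matrix.sub_mul, Matrix.mul_sub, xx, Matrix.mul_one, ← Matrix.mul_assoc, yy',
      Matrix.one_mul]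
  have W4 : y⁻¹ * (x * z⁻¹) = y⁻¹ + z⁻¹ := by
    rw [hxzy, Matrix.add_mul, Matrix.mul_add, zz, Matrix.mul_one, ← Matrix.mul_assoc, yy',
      Matrix.one_mul]
  obtain ⟨W, hW⟩ : ∃ W, W = z⁻¹ * (y * x⁻¹) := ⟨_, rfl⟩
  have hW' : W = x⁻¹ * (y * z⁻¹) := by rw [hW, W1, W2]
  have hWz : W * (z * y⁻¹) = x⁻¹ := by
    rw [hW']; simp only [Matrix.mul_assoc]
    rw [← Matrix.mul_assoc z⁻¹, zz', Matrix.one_mul, yy, Matrix.mul_one]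
  have hWx : W * (x * y⁻¹) = z⁻¹ := by
    rw [hW]; simp only [Matrix.mul_assoc]
    rw [← Matrix.mul_assoc x⁻¹, xx', Matrix.one_mul, yy, Matrix.mul_one]
  have hzW : y⁻¹ * (z * W) = x⁻¹ := by rw [hW, zzA, yyA']
  have hxW : y⁻¹ * (x * W) = z⁻¹ := by rw [hW', xxA, yyA']
  have hGi : (Gmat ζ i j k)⁻¹ = (1 / 2 : ℂ) • W := by
    apply Matrix.inv_eq_right_inv
    rw [Gmat, ← hx, ← hy, ← hz, hW, ← Nat.cast_smul_eq_nsmul ℂ, Matrix.smul_mul,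
      Matrix.mul_smul, smul_smul]
    simp only [Matrix.mul_assoc, zzA, yyA', xx]
    norm_num
  have hcc : (c⁻¹)ᵀ * c⁻¹ = (1 / 2 : ℂ) • W := by
    rw [← hGi, ← hc, Matrix.mul_inv_rev, Matrix.transpose_nonsing_inv]
  have hL : (c⁻¹ * fMat ζ i j k)ᵀ * (c⁻¹ * fMat ζ i j k)
      = (1 / 2 : ℂ) • ((fMat ζ i j k)ᵀ * (W * fMat ζ i j k)) := by
    rw [Matrix.transpose_mul, Matrix.mul_assoc, ← Matrix.mul_assoc _ c⁻¹, hcc, Matrix.smul_mul,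
      Matrix.mul_smul]
  rw [hL]
  congr 1
  ext ⟨m, r⟩ ⟨m', r'⟩
  rw [fMat_gram_apply]
  simp only [fBlk, edgeMat, Matrix.sub_apply, Matrix.add_apply, Matrix.of_apply, hjk', ← hx, ← hy,
    ← hz, neg_inv_mat y hyu]
  simp only [← Matrix.sub_apply, ← Matrix.add_apply]
  refine congrFun (congrFun ?_ r) r'
  have n1 := hij.ne
  have n2 := hjk.ne
  have n3 := hik.ne
  have hm : ∀ m : Fin 5, m = i ∨ m = j ∨ m = k ∨ (m ≠ i ∧ m ≠ j ∧ m ≠ k) := by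
    intro m; tauto
  rcases hm m with h | h | h | h <;> rcases hm m' with h' | h' | h' | h' <;>
  simp [h, h', n1, n2, n3, n1.symm, n2.symm, n3.symm, hxT, hzT, hyiT, Matrix.mul_assoc,
    xx, zz, hWz, hWx, hzW, hxW, W3, W4]
  all_goals first | (rw [hW, W1]; abel) | abel

/-! ### The stacked matrices -/

lemma stack3_gram {n : ℕ} (A B C : Matrix (Fin n) (Fin 5 × Fin n) ℂ) :
    (stack3 A B C)ᵀ * stack3 A B C = Aᵀ * A + Bᵀ * B + Cᵀ * C := by
  ext a b
  have h0 : ∀ r c, stack3 A B C (0, r) c = A r c := fun _ _ => rfl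
  have h1 : ∀ r c, stack3 A B C (1, r) c = B r c := fun _ _ => rfl
  have h2 : ∀ r c, stack3 A B C (2, r) c = C r c := fun _ _ => rfl
  simp only [Matrix.mul_apply, Matrix.add_apply, Matrix.transpose_apply, Fintype.sum_prod_type,
    Fin.sum_univ_three, h0, h1, h2]

/-- The block column of height `5n` with `Y` in block position `m` and zero elsewhere. -/
def insBlk {n : ℕ} (m : Fin 5) (Y : Matrix (Fin n) (Fin n) ℂ) :
    Matrix (Fin 5 × Fin n) (Fin n) ℂ :=
  Matrix.of fun a r => if a.1 = m then Y a.2 r else 0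

lemma fMat_mul_insBlk {n : ℕ} (ζ : Fin 5 → Matrix (Fin n) (Fin n) ℂ) (i j k m : Fin 5)
    (Y : Matrix (Fin n) (Fin n) ℂ) :
    fMat ζ i j k * insBlk m Y = fBlk ζ i j k m * Y := by
  ext r s
  have h : ∀ a : Fin 5 × Fin n, fMat ζ i j k r a = fBlk ζ i j k a.1 r a.2 := fun _ => rfl
  rw [Matrix.mul_apply, Matrix.mul_apply, Fintype.sum_prod_type,
    Finset.sum_eq_single m (fun b _ hb => by simp [insBlk, hb]) (by simp)]
  simp [insBlk, h]

lemma stack3_rightInv {n : ℕ} {A B C : Matrix (Fin n) (Fin 5 × Fin n) ℂ}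
    {X Y Z : Matrix (Fin 5 × Fin n) (Fin n) ℂ}
    (hAX : A * X = 1) (hAY : A * Y = 0) (hAZ : A * Z = 0)
    (hBX : B * X = 0) (hBY : B * Y = 1) (hBZ : B * Z = 0)
    (hCX : C * X = 0) (hCY : C * Y = 0) (hCZ : C * Z = 1) :
    ∃ V : Matrix (Fin 5 × Fin n) (Fin 3 × Fin n) ℂ, stack3 A B C * V = 1 := by
  refine ⟨Matrix.of fun a b => ![X, Y, Z] b.1 a b.2, ?_⟩
  ext ⟨a, r⟩ ⟨b, s⟩
  have key : (stack3 A B C * Matrix.of fun a b => ![X, Y, Z] b.1 a b.2) (a, r) (b, s)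
      = (![A, B, C] a * ![X, Y, Z] b) r s := rfl
  rw [key]
  fin_cases a <;> fin_cases b <;> simp [*, Matrix.one_apply]

/-- In the block columns `0`, `2`, `4` the stack is block lower triangular with invertible diagonal
blocks, so its right inverse can be taken supported there. -/
lemma stack_rightInv {n : ℕ} (ζ : Fin 5 → Matrix (Fin n) (Fin n) ℂ)
    (hinv : ∀ p q : Fin 5, p ≠ q → IsUnit (ζ p - ζ q))
    {c₁ c₂ c₃ : Matrix (Fin n) (Fin n) ℂ} (h₁ : IsUnit c₁) (h₂ : IsUnit c₂) (h₃ : IsUnit c₃) :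
    ∃ V : Matrix (Fin 5 × Fin n) (Fin 3 × Fin n) ℂ,
      stack3 (c₁⁻¹ * fMat ζ 0 1 3) (c₂⁻¹ * fMat ζ 1 2 3) (c₃⁻¹ * fMat ζ 0 3 4) * V = 1 := by
  have hd : ∀ A : Matrix (Fin n) (Fin n) ℂ, IsUnit A → A⁻¹ * A = 1 := fun A hA =>
    Matrix.nonsing_inv_mul A ((Matrix.isUnit_iff_isUnit_det A).mp hA)
  have hr : ∀ A : Matrix (Fin n) (Fin n) ℂ, IsUnit A → ∃ B, A * B = 1 := fun A hA =>
    ⟨A⁻¹, Matrix.mul_nonsing_inv A ((Matrix.isUnit_iff_isUnit_det A).mp hA)⟩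
  have hi : ∀ A : Matrix (Fin n) (Fin n) ℂ, IsUnit A → IsUnit A⁻¹ := fun A hA =>
    (Matrix.isUnit_nonsing_inv_iff).mpr hA
  obtain ⟨u, hu⟩ := hr _ ((hinv 1 3 (by decide)).mul (hi _ (hinv 3 2 (by decide))))
  obtain ⟨v, hv⟩ := hr _ ((hinv 0 3 (by decide)).mul (hi _ (hinv 3 4 (by decide))))
  have hu' : ∀ A, (ζ 1 - ζ 3) * ((ζ 3 - ζ 2)⁻¹ * (u * A)) = A := fun A => by
    rw [← Matrix.mul_assoc, ← Matrix.mul_assoc, hu, Matrix.one_mul]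
  have hv' : ∀ A, (ζ 0 - ζ 3) * ((ζ 3 - ζ 4)⁻¹ * (v * A)) = A := fun A => by
    rw [← Matrix.mul_assoc, ← Matrix.mul_assoc, hv, Matrix.one_mul]
  refine stack3_rightInv (X := insBlk 0 c₁ - insBlk 4 (v * c₁)) (Y := insBlk 2 (u * c₂))
    (Z := insBlk 4 (v * c₃)) ?_ ?_ ?_ ?_ ?_ ?_ ?_ ?_ ?_ <;>
  simp [Matrix.mul_assoc, Matrix.mul_sub, fMat_mul_insBlk, fBlk, hd, hu', hv', h₁, h₂, h₃]


theorem pentagon_orthogonal {n : ℕ} (ζ : Fin 5 → Matrix (Fin n) (Fin n) ℂ)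
    (hsym : ∀ p : Fin 5, (ζ p)ᵀ = ζ p)
    (hinv : ∀ p q : Fin 5, p ≠ q → IsUnit (ζ p - ζ q))
    (c : Fin 5 → Fin 5 → Fin 5 → Matrix (Fin n) (Fin n) ℂ)
    (hc : ∀ i j k : Fin 5, i < j → j < k →
      IsUnit (c i j k) ∧ c i j k * (c i j k)ᵀ = Gmat ζ i j k) :
    (∃! PQRST : Matrix (Fin 3 × Fin n) (Fin 3 × Fin n) ℂ ×
        Matrix (Fin 3 × Fin n) (Fin 3 × Fin n) ℂ ×
        Matrix (Fin 3 × Fin n) (Fin 3 × Fin n) ℂ ×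
        Matrix (Fin 3 × Fin n) (Fin 3 × Fin n) ℂ ×
        Matrix (Fin 3 × Fin n) (Fin 3 × Fin n) ℂ,
      FlipEqns ζ c PQRST.1 PQRST.2.1 PQRST.2.2.1 PQRST.2.2.2.1 PQRST.2.2.2.2) ∧
    ∀ P Q R S T : Matrix (Fin 3 × Fin n) (Fin 3 × Fin n) ℂ,
      FlipEqns ζ c P Q R S T →
        PatP P ∧ PatQ Q ∧ PatR R ∧ PatQ S ∧ PatP T ∧
        Pᵀ * P = 1 ∧ Qᵀ * Q = 1 ∧ Rᵀ * R = 1 ∧ Sᵀ * S = 1 ∧ Tᵀ * T = 1 ∧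
        Q * P = T * S * R := by
  have h013 := hc 0 1 3 (by decide) (by decide)
  have h123 := hc 1 2 3 (by decide) (by decide)
  have h034 := hc 0 3 4 (by decide) (by decide)
  have gt := fun (i j k : Fin 5) (hij : i < j) (hjk : j < k) =>
    gram_triangle ζ hsym hinv i j k hij hjk (c i j k) (hc i j k hij hjk).2
  obtain ⟨e, he⟩ : ∃ e : Fin 5 → Fin 5 → Fin 5 → Matrix (Fin n) (Fin 5 × Fin n) ℂ,
    e = fun i j k => (c i j k)⁻¹ * fMat ζ i j k := ⟨_, rfl⟩
  have gt' : ∀ i j k : Fin 5, i < j → j < k → (e i j k)ᵀ * e i j k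
      = (1 / 2 : ℂ) • (edgeMat ζ i j + edgeMat ζ j k - edgeMat ζ i k) := by
    rw [he]; exact gt
  have hX₁ : ∃ V : Matrix (Fin 5 × Fin n) (Fin 3 × Fin n) ℂ,
      stack3 (e 0 1 3) (e 1 2 3) (e 0 3 4) * V = 1 := by
    rw [he]; exact stack_rightInv ζ hinv h013.1 h123.1 h034.1
  have hFlip : ∀ P Q R S T, FlipEqns ζ c P Q R S T ↔
      P * stack3 (e 0 1 3) (e 1 2 3) (e 0 3 4) = stack3 (e 0 1 2) (e 0 2 3) (e 0 3 4) ∧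
      Q * stack3 (e 0 1 2) (e 0 2 3) (e 0 3 4) = stack3 (e 0 1 2) (e 0 2 4) (e 2 3 4) ∧
      R * stack3 (e 0 1 3) (e 1 2 3) (e 0 3 4) = stack3 (e 0 1 4) (e 1 2 3) (e 1 3 4) ∧
      S * stack3 (e 0 1 4) (e 1 2 3) (e 1 3 4) = stack3 (e 0 1 4) (e 1 2 4) (e 2 3 4) ∧
      T * stack3 (e 0 1 4) (e 1 2 4) (e 2 3 4) = stack3 (e 0 1 2) (e 0 2 4) (e 2 3 4) := by
    intro P Q R S T
    rw [he]; rfl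
  -- The Gram matrices of the five stacks agree.
  have g₂ : (stack3 (e 0 1 2) (e 0 2 3) (e 0 3 4))ᵀ * stack3 (e 0 1 2) (e 0 2 3) (e 0 3 4)
      = (stack3 (e 0 1 3) (e 1 2 3) (e 0 3 4))ᵀ * stack3 (e 0 1 3) (e 1 2 3) (e 0 3 4) := by
    simp only [stack3_gram]
    rw [gt' 0 1 2, gt' 0 2 3, gt' 0 3 4, gt' 0 1 3, gt' 1 2 3] <;> first | decide | module
  have g₃ : (stack3 (e 0 1 2) (e 0 2 4) (e 2 3 4))ᵀ * stack3 (e 0 1 2) (e 0 2 4) (e 2 3 4)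
      = (stack3 (e 0 1 2) (e 0 2 3) (e 0 3 4))ᵀ * stack3 (e 0 1 2) (e 0 2 3) (e 0 3 4) := by
    simp only [stack3_gram]
    rw [gt' 0 1 2, gt' 0 2 3, gt' 0 3 4, gt' 0 2 4, gt' 2 3 4] <;> first | decide | module
  have g₄ : (stack3 (e 0 1 4) (e 1 2 3) (e 1 3 4))ᵀ * stack3 (e 0 1 4) (e 1 2 3) (e 1 3 4)
      = (stack3 (e 0 1 3) (e 1 2 3) (e 0 3 4))ᵀ * stack3 (e 0 1 3) (e 1 2 3) (e 0 3 4) := by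
    simp only [stack3_gram]
    rw [gt' 0 1 4, gt' 1 2 3, gt' 1 3 4, gt' 0 1 3, gt' 0 3 4] <;> first | decide | module
  have g₅ : (stack3 (e 0 1 4) (e 1 2 4) (e 2 3 4))ᵀ * stack3 (e 0 1 4) (e 1 2 4) (e 2 3 4)
      = (stack3 (e 0 1 4) (e 1 2 3) (e 1 3 4))ᵀ * stack3 (e 0 1 4) (e 1 2 3) (e 1 3 4) := by
    simp only [stack3_gram]
    rw [gt' 0 1 4, gt' 1 2 4, gt' 2 3 4, gt' 1 2 3, gt' 1 3 4] <;> first | decide | module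
  have g₆ : (stack3 (e 0 1 2) (e 0 2 4) (e 2 3 4))ᵀ * stack3 (e 0 1 2) (e 0 2 4) (e 2 3 4)
      = (stack3 (e 0 1 4) (e 1 2 4) (e 2 3 4))ᵀ * stack3 (e 0 1 4) (e 1 2 4) (e 2 3 4) := by
    rw [g₃, g₂, g₅, g₄]
  have hX₂ := rightInv_transfer g₂ hX₁
  have hX₃ := rightInv_transfer g₃ hX₂
  have hX₄ := rightInv_transfer g₄ hX₁
  have hX₅ := rightInv_transfer g₅ hX₄
  constructor
  · obtain ⟨P, hP⟩ := exists_flip g₂ hX₂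
    obtain ⟨Q, hQ⟩ := exists_flip g₃ hX₃
    obtain ⟨R, hR⟩ := exists_flip g₄ hX₄
    obtain ⟨S, hS⟩ := exists_flip g₅ hX₅
    obtain ⟨T, hT⟩ := exists_flip g₆ hX₃
    refine ⟨(P, Q, R, S, T), (hFlip P Q R S T).mpr ⟨hP, hQ, hR, hS, hT⟩, ?_⟩
    rintro ⟨P', Q', R', S', T'⟩ h
    obtain ⟨hP', hQ', hR', hS', hT'⟩ := (hFlip P' Q' R' S' T').mp h
    obtain ⟨X₁, hX₁⟩ := hX₁
    obtain ⟨X₂, hX₂⟩ := hX₂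
    obtain ⟨X₄, hX₄⟩ := hX₄
    obtain ⟨X₅, hX₅⟩ := hX₅
    rw [cancel_right hX₁ (hP'.trans hP.symm), cancel_right hX₂ (hQ'.trans hQ.symm),
      cancel_right hX₁ (hR'.trans hR.symm), cancel_right hX₄ (hS'.trans hS.symm),
      cancel_right hX₅ (hT'.trans hT.symm)]
  · intro P Q R S T h
    obtain ⟨hP, hQ, hR, hS, hT⟩ := (hFlip P Q R S T).mp h
    have fP := fun r => flip_fixed g₂ hX₁ hP (b := (2, r)) fun _ => rfl
    have fQ := fun r => flip_fixed g₃ hX₂ hQ (b := (0, r)) fun _ => rfl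
    have fR := fun r => flip_fixed g₄ hX₁ hR (b := (1, r)) fun _ => rfl
    have fS := fun r => flip_fixed g₅ hX₄ hS (b := (0, r)) fun _ => rfl
    have fT := fun r => flip_fixed g₆ hX₅ hT (b := (2, r)) fun _ => rfl
    refine ⟨?_, ?_, ?_, ?_, ?_, flip_orthogonal g₂ hX₁ hP, flip_orthogonal g₃ hX₂ hQ,
      flip_orthogonal g₄ hX₁ hR, flip_orthogonal g₅ hX₄ hS, flip_orthogonal g₆ hX₅ hT, ?_⟩
    · refine ⟨?_, ?_, ?_, ?_, ?_⟩ <;> ext r s <;> simp [blk, fP, Matrix.one_apply]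
    · refine ⟨?_, ?_, ?_, ?_, ?_⟩ <;> ext r s <;> simp [blk, fQ, Matrix.one_apply]
    · refine ⟨?_, ?_, ?_, ?_, ?_⟩ <;> ext r s <;> simp [blk, fR, Matrix.one_apply]
    · refine ⟨?_, ?_, ?_, ?_, ?_⟩ <;> ext r s <;> simp [blk, fS, Matrix.one_apply]
    · refine ⟨?_, ?_, ?_, ?_, ?_⟩ <;> ext r s <;> simp [blk, fT, Matrix.one_apply]
    · obtain ⟨X₁, hX₁⟩ := hX₁
      apply cancel_right hX₁
      rw [Matrix.mul_assoc, hP, hQ, Matrix.mul_assoc, hR, Matrix.mul_assoc, hS, hT]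
end

section
/- Let a, c, b11, b12, b21, b22 be complex numbers with Δ = b11·b22 − b12·b21 ≠ 0, and let J = [[0,1,0,0],[1,0,0,0],[0,0,0,1],[0,0,1,0]]. Define A = [[1,0,0,a],[0,1,0,0],[0,−a,1,0],[0,0,0,1]], B = (1/Δ)·[[0, −b11Δ, 0, −b21Δ],[−b22, 0, b12, 0],[0, −b12Δ, 0, −b22Δ],[b21, 0, −b11, 0]], and C = [[1,0,0,c],[0,1,0,0],[0,−c,1,0],[0,0,0,1]]. Then each of A, B, C satisfies Mᵀ·J·M = J. -/
open Matrix

/-! `Mᵀ * J * M = J` says that the columns of `M` have the same pairwise products as the standard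
basis under the symmetric form `x₁y₂ + x₂y₁ + x₃y₄ + x₄y₃`. `A` and `C` are instances of one
shear. The odd and even columns of `B` lie in complementary isotropic planes, and the pairing
between these planes is the product of a `2 × 2` matrix with its adjugate, normalised by its
determinant `Δ`. -/

/-- The shear `x₁ ↦ x₁ + t x₄`, `x₃ ↦ x₃ - t x₂` preserves the symmetric form `J`: the two
cross terms `± t` it produces in the pairing of the second and fourth columns cancel. -/
lemma shear_preserves_form (t : ℂ) :
    (!![1, 0, 0, t; 0, 1, 0, 0; 0, -t, 1, 0; 0, 0, 0, 1] : Matrix (Fin 4) (Fin 4) ℂ)ᵀ *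
      !![0, 1, 0, 0; 1, 0, 0, 0; 0, 0, 0, 1; 0, 0, 1, 0] *
      !![1, 0, 0, t; 0, 1, 0, 0; 0, -t, 1, 0; 0, 0, 0, 1] =
    !![0, 1, 0, 0; 1, 0, 0, 0; 0, 0, 0, 1; 0, 0, 1, 0] := by
  ext i j
  fin_cases i <;> fin_cases j <;> simp [Matrix.mul_apply, Fin.sum_univ_four]

/- J is the matrix of fermionic anticommutation relations for two
creation–annihilation pairs; A, B, C are the matrices of the canonical
transformations induced by multiplication by exp(a x1 x2), by the Berezin
integral against exp(Σ b_ij x_i y_j), and by multiplication by exp(c y1 y2).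
Each of them satisfies Mᵀ·J·M = J. -/

theorem ABC_are_canonical (a c b11 b12 b21 b22 : ℂ)
    (hΔ : b11 * b22 - b12 * b21 ≠ 0) :
    let Δ := b11 * b22 - b12 * b21
    let J : Matrix (Fin 4) (Fin 4) ℂ :=
      !![0, 1, 0, 0; 1, 0, 0, 0; 0, 0, 0, 1; 0, 0, 1, 0]
    let A : Matrix (Fin 4) (Fin 4) ℂ :=
      !![1, 0, 0, a; 0, 1, 0, 0; 0, -a, 1, 0; 0, 0, 0, 1]
    let B : Matrix (Fin 4) (Fin 4) ℂ :=
      (1 / Δ) • !![0, -b11 * Δ, 0, -b21 * Δ;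
                   -b22, 0, b12, 0;
                   0, -b12 * Δ, 0, -b22 * Δ;
                   b21, 0, -b11, 0]
    let C : Matrix (Fin 4) (Fin 4) ℂ :=
      !![1, 0, 0, c; 0, 1, 0, 0; 0, -c, 1, 0; 0, 0, 0, 1]
    Aᵀ * J * A = J ∧ Bᵀ * J * B = J ∧ Cᵀ * J * C = J := by
  intro Δ J A B C
  refine ⟨shear_preserves_form a, ?_, shear_preserves_form c⟩
  have hΔ' : Δ ≠ 0 := hΔ
  have hdet : Δ = b11 * b22 - b12 * b21 := rfl
  -- `Δ` is kept atomic so that `field_simp` can cancel it before it is expanded.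
  clear_value Δ
  ext i j
  fin_cases i <;> fin_cases j <;>
    simp [B, J, Matrix.mul_apply, Fin.sum_univ_four] <;>
    field_simp <;> rw [hdet] <;> ring
end

section
/- Let a, c, b11, b12, b21, b22 be complex numbers with Δ = b11·b22 − b12·b21 ≠ 0, let J = [[0,1,0,0],[1,0,0,0],[0,0,0,1],[0,0,1,0]], and let W = (1/Δ)·[[c·b21, b11(ac−Δ), −c·b11, b21(ac−Δ)],[−b22, −a·b12, b12, −a·b22],[c·b22, b12(ac−Δ), −c·b12, b22(ac−Δ)],[b21, a·b11, −b11, a·b21]]. Then Wᵀ·J·W = J; i.e., W is a canonical transformation preserving the fermionic anticommutation relations. -/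
/-! Write `W = Δ⁻¹ • M`. The `(i, j)` entry of `Mᵀ * J * M` is
`M₀ᵢ M₁ⱼ + M₁ᵢ M₀ⱼ + M₂ᵢ M₃ⱼ + M₃ᵢ M₂ⱼ`. These entries cancel identically except at the
positions where `J` has a `1`, where they equal `a c Δ - (a c - Δ) Δ = Δ ^ 2`. Hence
`Mᵀ * J * M = Δ ^ 2 • J`, and the two factors `Δ⁻¹` cancel `Δ ^ 2` since `Δ ≠ 0`. -/

open Matrix

/- J is the matrix of fermionic anticommutation relations for two
creation–annihilation pairs; W is the matrix of the canonical transformation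
induced by the Grassmann–Gaussian tetrahedron weight
exp(a x1x2 + b11 x1y1 + b12 x1y2 + b21 x2y1 + b22 x2y2 + c y1y2).
Then Wᵀ·J·W = J. -/

theorem W_is_canonical (a c b11 b12 b21 b22 : ℂ)
    (hΔ : b11 * b22 - b12 * b21 ≠ 0) :
    let Δ := b11 * b22 - b12 * b21
    let J : Matrix (Fin 4) (Fin 4) ℂ :=
      !![0, 1, 0, 0; 1, 0, 0, 0; 0, 0, 0, 1; 0, 0, 1, 0]
    let W : Matrix (Fin 4) (Fin 4) ℂ :=
      (1 / Δ) • !![c * b21, b11 * (a * c - Δ), -(c * b11), b21 * (a * c - Δ);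
                   -b22, -(a * b12), b12, -(a * b22);
                   c * b22, b12 * (a * c - Δ), -(c * b12), b22 * (a * c - Δ);
                   b21, a * b11, -b11, a * b21]
    Wᵀ * J * W = J := by
  intro Δ J W
  have hJ : (Δ • W)ᵀ * J * (Δ • W) = Δ ^ 2 • J := by
    simp only [W, smul_smul, mul_one_div_cancel (show Δ ≠ 0 from hΔ), one_smul]
    ext i j
    fin_cases i <;> fin_cases j <;>
      simp [J, Δ, Matrix.mul_apply, Fin.sum_univ_four] <;> ring
  rw [transpose_smul, Matrix.smul_mul, Matrix.smul_mul, Matrix.mul_smul, smul_smul, ← sq] at hJ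
  exact smul_right_injective _ (pow_ne_zero 2 hΔ) hJ
end

section
/- Let λ1, λ2, λ4, μ1, μ2, μ4 be complex numbers with λ21 = λ2−λ1, λ41 = λ4−λ1, λ42 = λ4−λ2 all nonzero (so that the matrices ζ14, ζ42, ζ12 below are invertible), and for i ∈ {1,2,4} let ζi = [[λi+μi, i·μi],[i·μi, λi−μi]] (i = √−1 in the entries). Then G124 = 2·ζ12·ζ42⁻¹·ζ14 has the same form: G124 = [[λ+μ, i·μ],[i·μ, λ−μ]], where λ = 2λ21λ41/λ42 and μ = 2(λ41²·μ21 − λ21²·μ41)/λ42², with λpq = λp−λq and μpq = μp−μq. -/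
/-!
Put `N = [[1, i], [i, -1]]`. Then `N² = 0` and `zetaMat l m = l + m N`, so these matrices form a copy
of the dual numbers over `ℂ`: `(l + m N)(l' + m' N) = l l' + (l m' + m l') N`, and for `l ≠ 0`
the inverse of `l + m N` is `l⁻¹ - m l⁻² N`. Computing the Gramian in this algebra leaves one
identity of rational functions for each of the two coefficients.
-/

open Matrix Complex

/- For complex parameters λ, μ, let ζ(λ,μ) = [[λ+μ, iμ],[iμ, λ−μ]] (i = √−1).
With ζi = ζ(λi, μi) for i ∈ {1,2,4} and λ21 = λ2−λ1, λ41 = λ4−λ1,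
λ42 = λ4−λ2 all nonzero, the Gramian G124 = 2ζ12ζ42⁻¹ζ14 has the same form:
G124 = ζ(λ, μ) with λ = 2λ21λ41/λ42 and
μ = 2(λ41²μ21 − λ21²μ41)/λ42², where λpq = λp−λq, μpq = μp−μq. -/

noncomputable def zetaMat (l m : ℂ) : Matrix (Fin 2) (Fin 2) ℂ :=
  !![l + m, Complex.I * m; Complex.I * m, l - m]

theorem zetaMat_sub (l m l' m' : ℂ) :
    zetaMat l m - zetaMat l' m' = zetaMat (l - l') (m - m') := by
  ext i j
  fin_cases i <;> fin_cases j <;> simp [zetaMat] <;> ring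

theorem two_nsmul_zetaMat (l m : ℂ) : 2 • zetaMat l m = zetaMat (2 * l) (2 * m) := by
  ext i j
  fin_cases i <;> fin_cases j <;> simp [zetaMat] <;> ring

/-- The product rule of the dual numbers: on the diagonal the terms in `m * m'` cancel
because `I ^ 2 = -1`. -/
theorem zetaMat_mul (l m l' m' : ℂ) :
    zetaMat l m * zetaMat l' m' = zetaMat (l * l') (l * m' + m * l') := by
  ext i j
  fin_cases i <;> fin_cases j <;> simp [zetaMat, Matrix.mul_apply, Fin.sum_univ_two] <;>
    first | ring1 | linear_combination (m * m') * Complex.I_sq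

theorem zetaMat_one_zero : zetaMat 1 0 = 1 := by
  ext i j
  fin_cases i <;> fin_cases j <;> simp [zetaMat]

theorem zetaMat_inv (l m : ℂ) (hl : l ≠ 0) :
    (zetaMat l m)⁻¹ = zetaMat l⁻¹ (-m / l ^ 2) := by
  apply Matrix.inv_eq_right_inv
  rw [zetaMat_mul, ← zetaMat_one_zero]
  congr 1 <;> field_simp
  ring

theorem G124_special_form (l1 l2 l4 m1 m2 m4 : ℂ)
    (h21 : l2 - l1 ≠ 0) (h41 : l4 - l1 ≠ 0) (h42 : l4 - l2 ≠ 0) :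
    2 • ((zetaMat l1 m1 - zetaMat l2 m2) * (zetaMat l4 m4 - zetaMat l2 m2)⁻¹ *
        (zetaMat l1 m1 - zetaMat l4 m4)) =
      zetaMat (2 * (l2 - l1) * (l4 - l1) / (l4 - l2))
        (2 * ((l4 - l1) ^ 2 * (m2 - m1) - (l2 - l1) ^ 2 * (m4 - m1)) /
          (l4 - l2) ^ 2) := by
  rw [zetaMat_sub, zetaMat_sub, zetaMat_sub, zetaMat_inv _ _ h42, zetaMat_mul, zetaMat_mul,
    two_nsmul_zetaMat]
  congr 1 <;> field_simp <;> ring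
end
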